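/- For every odd integer k ≥ 3 and every ν > 0, ψ((ν+k)/2) − ψ(ν/2) − k/ν ≤ 0, where ψ is the digamma function. -/

import Mathlib

open Real

/-- The digamma function: the derivative of `x ↦ log Γ(x)`. -/
noncomputable def digamma (x : ℝ) : ℝ :=
  deriv (fun y : ℝ => Real.log (Real.Gamma y)) x

lemma diff_logGamma {x : ℝ} (hx : 0 < x) :
    DifferentiableAt ℝ (fun y : ℝ => Real.log (Real.Gamma y)) x := by
  refine DifferentiableAt.log (Real.differentiableAt_Gamma fun m => ?_) (Real.Gamma_pos_of_pos hx).ne'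
  have : (0 : ℝ) ≤ m := Nat.cast_nonneg m
  linarith

lemma digamma_mono {x y : ℝ} (hx : 0 < x) (hxy : x ≤ y) : digamma x ≤ digamma y := by
  have h := Real.convexOn_log_Gamma.monotoneOn_deriv (fun z hz => diff_logGamma hz)
  exact h (show x ∈ Set.Ioi (0 : ℝ) from hx) (show y ∈ Set.Ioi (0 : ℝ) from hx.trans_le hxy) hxy

lemma digamma_succ {x : ℝ} (hx : 0 < x) : digamma (x + 1) = digamma x + 1 / x := by
  unfold digamma
  rw [← deriv_comp_add_const]
  have he : (fun y : ℝ => Real.log (Real.Gamma (y + 1))) =ᶠ[nhds x]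
      fun y => Real.log (Real.Gamma y) + Real.log y := by
    filter_upwards [lt_mem_nhds hx] with y hy
    rw [Real.Gamma_add_one hy.ne', Real.log_mul hy.ne' (Real.Gamma_pos_of_pos hy).ne', add_comm]
  rw [he.deriv_eq, deriv_fun_add (diff_logGamma hx) (Real.differentiableAt_log hx.ne'),
    Real.deriv_log, one_div]

lemma step_three {x : ℝ} (hx : 0 < x) :
    digamma (x + 3 / 2) - digamma x - 3 / (2 * x)
      ≤ digamma (x + 1 + 3 / 2) - digamma (x + 1) - 3 / (2 * (x + 1)) := by
  have h1 := digamma_succ hx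
  have h2 := digamma_succ (show 0 < x + 3 / 2 by linarith)
  rw [show x + 1 + 3 / 2 = x + 3 / 2 + 1 by ring, h1, h2]
  have : 1 / (x + 3 / 2) - 1 / x - 3 / (2 * (x + 1)) + 3 / (2 * x)
      = 3 / (4 * x * (x + 1) * (x + 3 / 2)) := by
    field_simp
    ring
  have : 0 < 3 / (4 * x * (x + 1) * (x + 3 / 2)) := by positivity
  linarith

lemma step_three_nat {x : ℝ} (hx : 0 < x) (n : ℕ) :
    digamma (x + 3 / 2) - digamma x - 3 / (2 * x)
      ≤ digamma (x + n + 3 / 2) - digamma (x + n) - 3 / (2 * (x + n)) := by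
  induction n with
  | zero => simp
  | succ n ih =>
    have := step_three (show 0 < x + n by positivity)
    push_cast
    rw [← add_assoc]
    linarith

lemma rough_three {x : ℝ} (hx : 0 < x) :
    digamma (x + 3 / 2) - digamma x - 3 / (2 * x) ≤ 1 / x := by
  have h0 := digamma_mono (show 0 < x + 3 / 2 by linarith) (show x + 3 / 2 ≤ x + 1 + 1 by linarith)
  have h1 := digamma_succ hx
  have h2 := digamma_succ (show 0 < x + 1 by linarith)
  have h3 : 1 / (x + 1) ≤ 1 / x := one_div_le_one_div_of_le hx (by linarith)
  have h4 : 3 / (2 * x) = 3 / 2 * (1 / x) := by field_simp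
  have h5 : 0 < 1 / x := by positivity
  linarith

lemma case_three {x : ℝ} (hx : 0 < x) :
    digamma (x + 3 / 2) - digamma x - 3 / (2 * x) ≤ 0 := by
  have ht : Filter.Tendsto (fun n : ℕ => 1 / (x + n)) Filter.atTop (nhds 0) := by
    simp_rw [one_div]
    exact Filter.Tendsto.inv_tendsto_atTop
      (Filter.tendsto_atTop_add_const_left _ _ tendsto_natCast_atTop_atTop)
  refine ge_of_tendsto' ht fun n => ?_
  exact (step_three_nat hx n).trans (rough_three (by positivity))

lemma case_odd {x : ℝ} (hx : 0 < x) (m : ℕ) :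
    digamma (x + 3 / 2 + m) - digamma x - (3 / 2 + m) * (1 / x) ≤ 0 := by
  induction m with
  | zero =>
    have := case_three hx
    have h4 : 3 / (2 * x) = 3 / 2 * (1 / x) := by field_simp
    simp only [Nat.cast_zero, add_zero]
    linarith
  | succ m ih =>
    have hm : (0 : ℝ) ≤ m := Nat.cast_nonneg m
    have h := digamma_succ (show 0 < x + 3 / 2 + m by positivity)
    have h3 : 1 / (x + 3 / 2 + m) ≤ 1 / x := one_div_le_one_div_of_le hx (by linarith)
    push_cast
    rw [← add_assoc, h]
    linarith

/-- For every odd integer `k ≥ 3` and every `ν > 0`,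
`ψ((ν+k)/2) − ψ(ν/2) − k/ν ≤ 0`, where `ψ` is the digamma function. -/
theorem digamma_odd_dim_nonpos (k : ℕ) (hk : 3 ≤ k) (hodd : Odd k)
    (ν : ℝ) (hν : 0 < ν) :
    digamma ((ν + k) / 2) - digamma (ν / 2) - k / ν ≤ 0 := by
  obtain ⟨j, rfl⟩ := hodd
  obtain ⟨m, rfl⟩ : ∃ m, j = m + 1 := ⟨j - 1, by omega⟩
  have h := case_odd (show 0 < ν / 2 by positivity) m
  have e1 : (ν + ((2 * (m + 1) + 1 : ℕ) : ℝ)) / 2 = ν / 2 + 3 / 2 + m := by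
    push_cast
    ring
  have e2 : ((2 * (m + 1) + 1 : ℕ) : ℝ) / ν = (3 / 2 + m) * (1 / (ν / 2)) := by
    push_cast
    field_simp
    ring
  rw [e1, e2]
  exact h
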